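/- Fix an integer n ≥ 2 and a real λ with −min{(23n + 4)/(28√n), (25n − 6)/(30√n)} ≤ λ < 0. Then there exists ε̄ > 0 such that for every ε ∈ (0, ε̄] the following holds: let f_ε be the maximal solution of the profile ODE f''(r)/(1 + f'(r)²) = (r − (n−1)/r)·f'(r) − f(r) − λ·√(1 + f'(r)²) on [0, r_*^ε) with f_ε(0) = −λ + ε and f_ε'(0) = 0, where r_*^ε is the blow-up radius (lim_{r → r_*^ε} f_ε'(r) = −∞), and set x_*^ε = lim_{r → r_*^ε} f_ε(r). Then r_*^ε ≥ √(log(1/(√π·ε))) and −(30n + 4)/√(log(1/(√π·ε))) − λ ≤ x_*^ε < −λ. -/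

import Mathlib

open Real Set Filter

/-- The profile ODE (2.7): `f''/(1+f'²) = (r - (n-1)/r) f' - f - λ √(1+f'²)` at the point `r`. -/
def ProfileEq (n : ℕ) (lam : ℝ) (f : ℝ → ℝ) (r : ℝ) : Prop :=
  deriv (deriv f) r / (1 + (deriv f r) ^ 2) =
    (r - ((n : ℝ) - 1) / r) * deriv f r - f r - lam * Real.sqrt (1 + (deriv f r) ^ 2)

open Topology

namespace NearPlane

structure Sol (m : ℕ) (Λ ε b : ℝ) (g H : ℝ → ℝ) : Prop where
  hm : 1 ≤ m
  hΛ : 0 < Λ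
  hε : 0 < ε
  hb : 0 < b
  dg : ∀ r ∈ Ioo 0 b, HasDerivAt g (-H r) r
  dH : ∀ r ∈ Ioo 0 b, HasDerivAt H
    ((1 + H r ^ 2) * ((r - m / r) * H r + g r - Λ * (√(1 + H r ^ 2) - 1))) r
  lg : Tendsto g (𝓝[>] 0) (𝓝 ε)
  lH : ∃ a, Tendsto H (𝓝[>] 0) (𝓝 a)
  top : Tendsto H (𝓝[<] b) atTop

lemma mono_Icc {F F' : ℝ → ℝ} {a c : ℝ} (hac : a ≤ c)
    (hd : ∀ r ∈ Icc a c, HasDerivAt F (F' r) r) (hp : ∀ r ∈ Icc a c, 0 ≤ F' r) : F a ≤ F c := by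
  have : MonotoneOn F (Icc a c) := by
    apply monotoneOn_of_hasDerivWithinAt_nonneg (convex_Icc a c) (f' := F')
    · intro r hr; exact (hd r hr).continuousAt.continuousWithinAt
    · intro r hr; exact (hd r (interior_subset hr)).hasDerivWithinAt
    · intro r hr; exact hp r (interior_subset hr)
  exact this ⟨le_rfl, hac⟩ ⟨hac, le_rfl⟩ hac

lemma mono_lim {F F' : ℝ → ℝ} {c L : ℝ} (hc : 0 < c)
    (hd : ∀ r ∈ Ioc 0 c, HasDerivAt F (F' r) r) (hp : ∀ r ∈ Ioc 0 c, 0 ≤ F' r)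
    (hL : Tendsto F (𝓝[>] 0) (𝓝 L)) : L ≤ F c := by
  apply le_of_tendsto hL
  filter_upwards [Ioo_mem_nhdsGT hc] with x hx
  exact mono_Icc hx.2.le (fun r hr => hd r ⟨hx.1.trans_le hr.1, hr.2⟩)
    (fun r hr => hp r ⟨hx.1.trans_le hr.1, hr.2⟩)

noncomputable def PP (m : ℕ) (Λ : ℝ) (g H : ℝ → ℝ) (r : ℝ) : ℝ :=
  (r - m / r) * H r + g r - Λ * (√(1 + H r ^ 2) - 1)

noncomputable def QQ (Λ : ℝ) (g H : ℝ → ℝ) (r : ℝ) : ℝ :=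
  r * H r + g r - Λ * (√(1 + H r ^ 2) - 1)

noncomputable def SS (H : ℝ → ℝ) (r : ℝ) : ℝ := H r / √(1 + H r ^ 2)

section
variable {m : ℕ} {Λ ε b : ℝ} {g H : ℝ → ℝ}

lemma w_pos (x : ℝ) : 0 < √(1 + x ^ 2) := Real.sqrt_pos.2 (by positivity)
lemma w_sq (x : ℝ) : √(1 + x ^ 2) ^ 2 = 1 + x ^ 2 := Real.sq_sqrt (by positivity)
lemma w_ge (x : ℝ) : 1 ≤ √(1 + x ^ 2) := by
  rw [Real.one_le_sqrt]; nlinarith [sq_nonneg x]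

lemma Sol.dH' (h : Sol m Λ ε b g H) : ∀ r ∈ Ioo 0 b,
    HasDerivAt H ((1 + H r ^ 2) * PP m Λ g H r) r := h.dH

lemma PP_eq (r : ℝ) : PP m Λ g H r = QQ Λ g H r - m * H r / r := by
  unfold PP QQ; ring

lemma Sol.dw (h : Sol m Λ ε b g H) : ∀ r ∈ Ioo 0 b,
    HasDerivAt (fun r => √(1 + H r ^ 2)) (SS H r * ((1 + H r ^ 2) * PP m Λ g H r)) r := by
  intro r hr
  have hne : 1 + (H ^ 2) r ≠ 0 := by
    have : 0 < 1 + H r ^ 2 := by positivity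
    simpa using this.ne'
  have h1 := (((h.dH' r hr).pow 2).const_add 1).sqrt hne
  refine h1.congr_deriv ?_
  have := (w_pos (H r)).ne'
  unfold SS
  simp only [Pi.pow_apply]
  field_simp
  norm_num
  ring

lemma Sol.dS (h : Sol m Λ ε b g H) : ∀ r ∈ Ioo 0 b,
    HasDerivAt (SS H) (PP m Λ g H r / √(1 + H r ^ 2)) r := by
  intro r hr
  have h1 := (h.dH' r hr).div (h.dw r hr) (w_pos (H r)).ne'
  refine h1.congr_deriv ?_
  have h2 := (w_pos (H r)).ne'
  have h3 := w_sq (H r)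
  unfold SS
  set w := √(1 + H r ^ 2)
  have h4 : H r ^ 2 = w ^ 2 - 1 := by linarith
  field_simp
  rw [h4]; ring

lemma Sol.dQ (h : Sol m Λ ε b g H) : ∀ r ∈ Ioo 0 b,
    HasDerivAt (QQ Λ g H) ((1 + H r ^ 2) * PP m Λ g H r * (r - Λ * SS H r)) r := by
  intro r hr
  have h1 := (((hasDerivAt_id r).mul (h.dH' r hr)).add (h.dg r hr)).sub
    (((h.dw r hr).sub_const 1).const_mul Λ)
  refine h1.congr_deriv ?_
  simp only [id]
  ring

lemma Sol.dP (h : Sol m Λ ε b g H) : ∀ r ∈ Ioo 0 b,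
    HasDerivAt (PP m Λ g H) (PP m Λ g H r * ((1 + H r ^ 2) * (r - Λ * SS H r - m / r))
      + m * H r / r ^ 2) r := by
  intro r hr
  have hr0 : r ≠ 0 := hr.1.ne'
  have h1 := (h.dQ r hr).sub (((h.dH' r hr).const_mul (m : ℝ)).div (hasDerivAt_id r) hr0)
  have h2 : PP m Λ g H = (QQ Λ g H - (fun y => m * H y) / id) := by
    funext y; simp [PP_eq]
  rw [h2]
  refine h1.congr_deriv ?_
  simp only [id, ← h2]
  field_simp
  ring

lemma Sol.dU (h : Sol m Λ ε b g H) : ∀ r ∈ Ioo 0 b,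
    HasDerivAt (fun r => r ^ m * SS H r) (r ^ m * (QQ Λ g H r / √(1 + H r ^ 2))) r := by
  intro r hr
  have hr0 : r ≠ 0 := hr.1.ne'
  have h1 := (hasDerivAt_pow m r).mul (h.dS r hr)
  refine h1.congr_deriv ?_
  obtain ⟨k, rfl⟩ : ∃ k, m = k + 1 := ⟨m - 1, by have := h.hm; omega⟩
  have h2 := (w_pos (H r)).ne'
  rw [PP_eq]
  unfold SS
  simp only [Nat.add_sub_cancel]
  push_cast
  field_simp
  ring

lemma S_abs_le (r : ℝ) : |SS H r| ≤ 1 := by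
  unfold SS
  rw [abs_div, abs_of_pos (w_pos _), div_le_one (w_pos _)]
  apply Real.abs_le_sqrt; linarith

lemma Sol.limU (h : Sol m Λ ε b g H) :
    Tendsto (fun r => r ^ m * SS H r) (𝓝[>] 0) (𝓝 0) := by
  have h1 : Tendsto (fun r : ℝ => r ^ m) (𝓝[>] 0) (𝓝 0) := by
    have : Tendsto (fun r : ℝ => r ^ m) (𝓝 0) (𝓝 (0 ^ m)) := (continuous_pow m).tendsto 0
    rw [zero_pow (by have := h.hm; omega)] at this
    exact this.mono_left nhdsWithin_le_nhds
  have h2 : Tendsto (fun r : ℝ => ‖r ^ m‖) (𝓝[>] 0) (𝓝 0) := by simpa using h1.norm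
  refine squeeze_zero_norm' ?_ h2
  filter_upwards with r
  rw [norm_mul]
  exact mul_le_of_le_one_right (norm_nonneg _) (S_abs_le r)

lemma lim_pow (c : ℝ) : Tendsto (fun r : ℝ => c * r ^ (m + 1)) (𝓝[>] 0) (𝓝 0) := by
  have : Tendsto (fun r : ℝ => c * r ^ (m + 1)) (𝓝 0) (𝓝 (c * 0 ^ (m + 1))) :=
    (by fun_prop : Continuous fun r : ℝ => c * r ^ (m + 1)).tendsto 0
  simp at this
  exact this.mono_left nhdsWithin_le_nhds

lemma dpow (c r : ℝ) : HasDerivAt (fun r : ℝ => c * r ^ (m + 1)) (r ^ m * (c * (m + 1))) r := by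
  refine ((hasDerivAt_pow (m + 1) r).const_mul c).congr_deriv ?_
  push_cast; ring

/-- lower bound on `S` from lower bound on `Q/w`. -/
lemma Sol.S_lower (h : Sol m Λ ε b g H) {c K : ℝ} (hc : 0 < c) (hcb : c < b)
    (hK : ∀ r ∈ Ioc 0 c, K * (m + 1) ≤ QQ Λ g H r / √(1 + H r ^ 2)) : K * c ≤ SS H c := by
  have := mono_lim (F := fun r => r ^ m * SS H r - K * r ^ (m + 1)) hc
    (fun r hr => (h.dU r ⟨hr.1, hr.2.trans_lt hcb⟩).sub (dpow K r))
    (fun r hr => by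
      rw [← mul_sub]
      exact mul_nonneg (pow_nonneg hr.1.le _) (by linarith [hK r hr]))
    (h.limU.sub (lim_pow K))
  simp only [sub_zero] at this
  have hp : 0 < c ^ m := pow_pos hc m
  have h2 : 0 ≤ c ^ m * (SS H c - K * c) := by
    rw [pow_succ] at this; linarith
  linarith [(mul_nonneg_iff_of_pos_left hp).1 h2]

lemma Sol.S_upper (h : Sol m Λ ε b g H) {c K : ℝ} (hc : 0 < c) (hcb : c < b)
    (hK : ∀ r ∈ Ioc 0 c, QQ Λ g H r / √(1 + H r ^ 2) ≤ K * (m + 1)) : SS H c ≤ K * c := by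
  have := mono_lim (F := fun r => K * r ^ (m + 1) - r ^ m * SS H r) hc
    (fun r hr => (dpow K r).sub (h.dU r ⟨hr.1, hr.2.trans_lt hcb⟩))
    (fun r hr => by
      rw [← mul_sub]
      exact mul_nonneg (pow_nonneg hr.1.le _) (by linarith [hK r hr]))
    ((lim_pow K).sub h.limU)
  simp only [sub_zero] at this
  have hp : 0 < c ^ m := pow_pos hc m
  have h2 : 0 ≤ c ^ m * (K * c - SS H c) := by
    rw [pow_succ] at this; linarith
  linarith [(mul_nonneg_iff_of_pos_left hp).1 h2]

lemma Sol.limId : Tendsto (fun r : ℝ => r) (𝓝[>] 0) (𝓝 0) :=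
  tendsto_id.mono_left nhdsWithin_le_nhds

lemma limW {a : ℝ} (ha : Tendsto H (𝓝[>] 0) (𝓝 a)) :
    Tendsto (fun r => √(1 + H r ^ 2)) (𝓝[>] 0) (𝓝 √(1 + a ^ 2)) :=
  ((ha.pow 2).const_add 1).sqrt

lemma Sol.limQ (h : Sol m Λ ε b g H) {a : ℝ} (ha : Tendsto H (𝓝[>] 0) (𝓝 a)) :
    Tendsto (QQ Λ g H) (𝓝[>] 0) (𝓝 (ε - Λ * (√(1 + a ^ 2) - 1))) := by
  have := ((Sol.limId.mul ha).add h.lg).sub (((limW ha).sub_const 1).const_mul Λ)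
  rw [zero_mul, zero_add] at this
  exact this

lemma Sol.lH0 (h : Sol m Λ ε b g H) : Tendsto H (𝓝[>] 0) (𝓝 0) := by
  obtain ⟨a, ha⟩ := h.lH
  suffices a = 0 by rwa [this] at ha
  have h1 := (h.limQ ha).div (limW ha) (w_pos a).ne'
  set L := (ε - Λ * (√(1 + a ^ 2) - 1)) / √(1 + a ^ 2)
  have h2 := h1.eventually (Ioo_mem_nhds (show L - 1 < L by linarith) (show L < L + 1 by linarith))
  obtain ⟨δ, hδ, hδ'⟩ := mem_nhdsGT_iff_exists_Ioo_subset.1 h2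
  simp only [mem_Ioi] at hδ
  have hm : (0 : ℝ) < m + 1 := by positivity
  have lS : Tendsto (SS H) (𝓝[>] 0) (𝓝 (a / √(1 + a ^ 2))) := ha.div (limW ha) (w_pos a).ne'
  have lS0 : Tendsto (SS H) (𝓝[>] 0) (𝓝 0) := by
    have e : ∀ K : ℝ, Tendsto (fun r : ℝ => K * r) (𝓝[>] 0) (𝓝 0) := fun K => by
      simpa using Sol.limId.const_mul K
    refine tendsto_of_tendsto_of_tendsto_of_le_of_le' (e ((L - 1) / (m + 1)))
      (e ((L + 1) / (m + 1))) ?_ ?_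
    · filter_upwards [Ioo_mem_nhdsGT hδ, Ioo_mem_nhdsGT h.hb] with r hr hr'
      refine h.S_lower hr.1 hr'.2 fun x hx => ?_
      rw [div_mul_cancel₀ _ hm.ne']
      exact (hδ' ⟨hx.1, hx.2.trans_lt hr.2⟩).1.le
    · filter_upwards [Ioo_mem_nhdsGT hδ, Ioo_mem_nhdsGT h.hb] with r hr hr'
      refine h.S_upper hr.1 hr'.2 fun x hx => ?_
      rw [div_mul_cancel₀ _ hm.ne']
      exact (hδ' ⟨hx.1, hx.2.trans_lt hr.2⟩).2.le
  have := tendsto_nhds_unique lS lS0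
  rcases div_eq_zero_iff.1 this with h | h
  · exact h
  · exact absurd h (w_pos a).ne'

lemma Sol.lQ (h : Sol m Λ ε b g H) : Tendsto (QQ Λ g H) (𝓝[>] 0) (𝓝 ε) := by
  simpa using h.limQ h.lH0

lemma S_pos_iff (r : ℝ) : 0 < SS H r ↔ 0 < H r := by
  unfold SS; exact div_pos_iff_of_pos_right (w_pos _)

lemma Sol.H_pos_near (h : Sol m Λ ε b g H) : ∃ δ, 0 < δ ∧ δ < b ∧ ∀ r ∈ Ioo 0 δ, 0 < H r := by
  have h1 : Tendsto (fun r => QQ Λ g H r / √(1 + H r ^ 2)) (𝓝[>] 0) (𝓝 ε) := by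
    have := h.lQ.div (limW h.lH0) (w_pos 0).ne'
    have e : ε / √(1 + 0 ^ 2) = ε := by simp
    rw [e] at this
    exact this
  obtain ⟨δ, hδ, hδ'⟩ := mem_nhdsGT_iff_exists_Ioo_subset.1
    (h1.eventually (lt_mem_nhds (half_lt_self h.hε)))
  simp only [mem_Ioi] at hδ
  have hm : (0 : ℝ) < m + 1 := by positivity
  refine ⟨min δ (b / 2), lt_min hδ (half_pos h.hb), (min_le_right _ _).trans_lt (half_lt_self h.hb),
    fun r hr => ?_⟩
  have hrδ := hr.2.trans_le (min_le_left _ _)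
  have hrb := (hr.2.trans_le (min_le_right _ _)).trans (half_lt_self h.hb)
  rw [← S_pos_iff]
  have := h.S_lower (K := ε / 2 / (m + 1)) hr.1 hrb fun x hx => by
      rw [div_mul_cancel₀ _ hm.ne']
      exact (hδ' ⟨hx.1, hx.2.trans_lt hrδ⟩ : ε / 2 < _).le
  have h3 := h.hε
  have h4 := hr.1
  exact lt_of_lt_of_le (by positivity) this

lemma Sol.persist (h : Sol m Λ ε b g H) {s c : ℝ} (hs : 0 < s) (hsc : s ≤ c) (hc : c < b)
    (hHs : 0 < H s) (hPs : 0 < PP m Λ g H s) : 0 < PP m Λ g H c ∧ 0 < H c := by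
  have key : ∀ t, s ≤ t → t < b → (∀ r ∈ Ico s t, 0 < PP m Λ g H r) → 0 < H t := by
    intro t hst htb hP
    rcases hst.eq_or_lt with rfl | hst
    · exact hHs
    have : MonotoneOn H (Icc s t) := by
      apply monotoneOn_of_hasDerivWithinAt_nonneg (convex_Icc s t)
        (f' := fun r => (1 + H r ^ 2) * PP m Λ g H r)
      · intro r hr
        exact (h.dH' r ⟨hs.trans_le hr.1, hr.2.trans_lt htb⟩).continuousAt.continuousWithinAt
      · intro r hr
        have hr := interior_subset hr
        exact (h.dH' r ⟨hs.trans_le hr.1, hr.2.trans_lt htb⟩).hasDerivWithinAt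
      · intro r hr
        rw [interior_Icc] at hr
        have := hP r ⟨hr.1.le, hr.2⟩
        positivity
    exact hHs.trans_le (this ⟨le_rfl, hst.le⟩ ⟨hst.le, le_rfl⟩ hst.le)
  suffices hall : ∀ r ∈ Icc s c, 0 < PP m Λ g H r from
    ⟨hall c ⟨hsc, le_rfl⟩, key c hsc hc fun r hr => hall r ⟨hr.1, hr.2.le⟩⟩
  by_contra! hbad
  obtain ⟨r0, hr0, hr0'⟩ := hbad
  have hcont : ContinuousOn (PP m Λ g H) (Icc s c) := fun r hr =>
    (h.dP r ⟨hs.trans_le hr.1, hr.2.trans_lt hc⟩).continuousAt.continuousWithinAt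
  have hcl : IsClosed (Icc s c ∩ PP m Λ g H ⁻¹' Iic 0) :=
    hcont.preimage_isClosed_of_isClosed isClosed_Icc isClosed_Iic
  have hcp : IsCompact (Icc s c ∩ PP m Λ g H ⁻¹' Iic 0) :=
    isCompact_Icc.of_isClosed_subset hcl inter_subset_left
  obtain ⟨t, ⟨htI, htP⟩, htl⟩ := hcp.exists_isLeast ⟨r0, hr0, hr0'⟩
  simp only [mem_preimage, mem_Iic] at htP
  have htb : t < b := htI.2.trans_lt hc
  have hst : s < t := by
    rcases htI.1.eq_or_lt with rfl | h
    · exact absurd htP (not_le.2 hPs)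
    · exact h
  have hlow : ∀ r ∈ Ico s t, 0 < PP m Λ g H r := by
    intro r hr
    by_contra! hneg
    exact absurd (htl ⟨⟨hr.1, hr.2.le.trans htI.2⟩, hneg⟩) (not_le.2 hr.2)
  have hHt := key t hst.le htb hlow
  have ht0 : 0 < t := hs.trans hst
  have hPt : PP m Λ g H t = 0 := by
    apply le_antisymm htP
    have : Tendsto (PP m Λ g H) (𝓝[<] t) (𝓝 (PP m Λ g H t)) :=
      (h.dP t ⟨ht0, htb⟩).continuousAt.tendsto.mono_left nhdsWithin_le_nhds
    apply ge_of_tendsto this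
    filter_upwards [Ioo_mem_nhdsLT hst] with r hr
    exact (hlow r ⟨hr.1.le, hr.2⟩).le
  have hd := h.dP t ⟨ht0, htb⟩
  rw [hPt, zero_mul, zero_add] at hd
  have hm : (0 : ℝ) < m := by exact_mod_cast h.hm
  have hpos : 0 < m * H t / t ^ 2 := by positivity
  have hsl := (hasDerivAt_iff_tendsto_slope.1 hd).eventually (lt_mem_nhds hpos)
  have hsl' : ∀ᶠ y in 𝓝[<] t, 0 < slope (PP m Λ g H) t y :=
    hsl.filter_mono (nhdsWithin_mono _ (fun y (hy : y < t) => hy.ne))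
  obtain ⟨y, hy, hy'⟩ := (hsl'.and (Ioo_mem_nhdsLT hst)).exists
  rw [slope_def_field, hPt, sub_zero] at hy
  have := hlow y ⟨hy'.1.le, hy'.2⟩
  have := div_neg_of_pos_of_neg this (sub_neg.2 hy'.2)
  linarith

lemma Sol.pos (h : Sol m Λ ε b g H) : ∀ r ∈ Ioo 0 b, 0 < PP m Λ g H r ∧ 0 < H r := by
  intro r hr
  obtain ⟨δ, hδ, hδb, hH⟩ := h.H_pos_near
  set η := min r (δ / 2) with hη
  have hη0 : 0 < η := lt_min hr.1 (half_pos hδ)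
  have hηr : η ≤ r := min_le_left _ _
  have hηδ : η < δ := (min_le_right _ _).trans_lt (half_lt_self hδ)
  have : ∃ s ∈ Ioc 0 η, 0 < PP m Λ g H s := by
    by_contra! hneg
    have h1 := mono_lim (F := fun r => - H r) hη0
      (fun x hx => (h.dH' x ⟨hx.1, hx.2.trans_lt (hηδ.trans hδb)⟩).neg)
      (fun x hx => by
        have := hneg x hx
        rw [neg_nonneg]
        exact mul_nonpos_of_nonneg_of_nonpos (by positivity) this)
      (by simpa using h.lH0.neg)
    have := hH η ⟨hη0, hηδ⟩
    linarith
  obtain ⟨s, hs, hPs⟩ := this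
  exact h.persist hs.1 (hs.2.trans hηr) hr.2 (hH s ⟨hs.1, hs.2.trans_lt hηδ⟩) hPs

lemma Sol.H_mono (h : Sol m Λ ε b g H) {x y : ℝ} (hx : 0 < x) (hxy : x ≤ y) (hy : y < b) :
    H x ≤ H y :=
  mono_Icc hxy (fun r hr => h.dH' r ⟨hx.trans_le hr.1, hr.2.trans_lt hy⟩) fun r hr => by
    have := (h.pos r ⟨hx.trans_le hr.1, hr.2.trans_lt hy⟩).1
    positivity

lemma Sol.g_anti (h : Sol m Λ ε b g H) {x y : ℝ} (hx : 0 < x) (hxy : x ≤ y) (hy : y < b) :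
    g y ≤ g x := by
  have := mono_Icc (F := fun r => - g r) hxy
    (fun r hr => (h.dg r ⟨hx.trans_le hr.1, hr.2.trans_lt hy⟩).neg) fun r hr => by
    have := (h.pos r ⟨hx.trans_le hr.1, hr.2.trans_lt hy⟩).2
    linarith
  linarith

lemma Sol.g_le (h : Sol m Λ ε b g H) : ∀ r ∈ Ioo 0 b, g r ≤ ε := by
  intro c hc
  have := mono_lim (F := fun r => - g r) hc.1
    (fun r hr => (h.dg r ⟨hr.1, hr.2.trans_lt hc.2⟩).neg) (fun r hr => by
      have := (h.pos r ⟨hr.1, hr.2.trans_lt hc.2⟩).2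
      linarith) h.lg.neg
  linarith

lemma Sol.S_le (h : Sol m Λ ε b g H) : ∀ r ∈ Ioo 0 b, SS H r ≤ ε * r * exp (r ^ 2 / 2) := by
  intro c hc
  have hdexp : ∀ r : ℝ, HasDerivAt (fun r : ℝ => exp (-(r ^ 2 / 2))) (exp (-(r ^ 2 / 2)) * (-r)) r := by
    intro r
    refine (((hasDerivAt_pow 2 r).div_const 2).neg.exp).congr_deriv ?_
    simp
  have lS0 : Tendsto (SS H) (𝓝[>] 0) (𝓝 0) := by
    have := h.lH0.div (limW h.lH0) (w_pos 0).ne'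
    rw [zero_div] at this
    exact this
  have lE : Tendsto (fun r : ℝ => exp (-(r ^ 2 / 2))) (𝓝[>] 0) (𝓝 1) := by
    have : Tendsto (fun r : ℝ => exp (-(r ^ 2 / 2))) (𝓝 0) (𝓝 (exp (-((0 : ℝ) ^ 2 / 2)))) :=
      (by fun_prop : Continuous fun r : ℝ => exp (-(r ^ 2 / 2))).tendsto 0
    simp at this
    exact this.mono_left nhdsWithin_le_nhds
  have := mono_lim (F := fun r => ε * r - SS H r * exp (-(r ^ 2 / 2))) (L := 0) hc.1
    (fun r hr => ((hasDerivAt_id r).const_mul ε).sub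
      ((h.dS r ⟨hr.1, hr.2.trans_lt hc.2⟩).mul (hdexp r))) (fun r hr => by
      have hrb : r ∈ Ioo 0 b := ⟨hr.1, hr.2.trans_lt hc.2⟩
      have hH := (h.pos r hrb).2
      have hg := h.g_le r hrb
      have hw := w_ge (H r)
      have hw0 := w_pos (H r)
      have hε := h.hε
      have hr0 := hr.1
      have hP : PP m Λ g H r ≤ r * H r + ε := by
        have h1 : 0 ≤ m / r * H r := by positivity
        have h2 : 0 ≤ Λ * (√(1 + H r ^ 2) - 1) := mul_nonneg h.hΛ.le (by linarith)
        unfold PP; linarith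
      have h3 : PP m Λ g H r / √(1 + H r ^ 2) ≤ r * SS H r + ε := by
        rw [div_le_iff₀ hw0]
        have : SS H r * √(1 + H r ^ 2) = H r := by unfold SS; field_simp
        have h5 : ε ≤ ε * √(1 + H r ^ 2) := by nlinarith
        rw [add_mul, mul_assoc, this]; linarith
      have h4 : exp (-(r ^ 2 / 2)) ≤ 1 := by
        rw [Real.exp_le_one_iff]; nlinarith [sq_nonneg r]
      have h6 := exp_pos (-(r ^ 2 / 2))
      have h7 : (PP m Λ g H r / √(1 + H r ^ 2) - r * SS H r) * exp (-(r ^ 2 / 2)) ≤ ε * 1 := by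
        calc _ ≤ ε * exp (-(r ^ 2 / 2)) := by
              apply mul_le_mul_of_nonneg_right _ h6.le; linarith
          _ ≤ _ := by apply mul_le_mul_of_nonneg_left h4 hε.le
      nlinarith)
    (by simpa using (Sol.limId.const_mul ε).sub (lS0.mul lE))
  have h1 : SS H c * exp (-(c ^ 2 / 2)) ≤ ε * c := by linarith
  rw [Real.exp_neg, ← div_eq_mul_inv, div_le_iff₀ (exp_pos _)] at h1
  exact h1

lemma H_le_of_S {r : ℝ} (hH : 0 < H r) (hS : SS H r ≤ 1 / 2) :
    H r ≤ 2 * SS H r ∧ √(1 + H r ^ 2) ≤ 2 := by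
  have hw := w_pos (H r)
  have h3 := w_sq (H r)
  have hSH : SS H r * √(1 + H r ^ 2) = H r := by unfold SS; field_simp
  have hS0 := (S_pos_iff (H := H) r).2 hH
  set w := √(1 + H r ^ 2)
  have h2 : w ≤ 2 := by
    have : H r ≤ 1 / 2 * w := by rw [← hSH]; exact mul_le_mul_of_nonneg_right hS hw.le
    by_contra! hc
    nlinarith
  exact ⟨by nlinarith, h2⟩

lemma exp_bound {R : ℝ} (hR : 16 ≤ R) : 2 * R ^ 3 ≤ exp (R ^ 2 / 2) := by
  have h := Real.pow_div_factorial_le_exp (R ^ 2 / 2) (by positivity) 3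
  have h2 : (R ^ 2 / 2) ^ 3 / (Nat.factorial 3 : ℝ) = R ^ 3 * R ^ 3 / 48 := by
    simp [Nat.factorial]; ring
  rw [h2] at h
  have h3 : (16 : ℝ) ^ 3 ≤ R ^ 3 := by gcongr
  nlinarith

lemma Sol.S_small (h : Sol m Λ ε b g H) {R : ℝ} (hR : 16 ≤ R) (hεR : ε ≤ exp (-R ^ 2))
    {r : ℝ} (hr : r ∈ Ioo 0 b) (hrR : r ≤ R) : SS H r ≤ r / (2 * R ^ 3) := by
  have h1 := h.S_le r hr
  have hr0 := hr.1
  have hE := exp_bound hR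
  have hEp := exp_pos (R ^ 2 / 2)
  have h2 : exp (r ^ 2 / 2) ≤ exp (R ^ 2 / 2) := by
    apply exp_le_exp.2; gcongr
  have h3 : ε * exp (R ^ 2 / 2) ≤ 1 / exp (R ^ 2 / 2) := by
    have e : 1 / exp (R ^ 2 / 2) = exp (-R ^ 2) * exp (R ^ 2 / 2) := by
      rw [← Real.exp_add, one_div, ← Real.exp_neg]; congr 1; ring
    rw [e]; exact mul_le_mul_of_nonneg_right hεR hEp.le
  have h4 : 1 / exp (R ^ 2 / 2) ≤ 1 / (2 * R ^ 3) := one_div_le_one_div_of_le (by positivity) hE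
  have hε := h.hε
  calc SS H r ≤ ε * r * exp (r ^ 2 / 2) := h1
    _ ≤ ε * r * exp (R ^ 2 / 2) := by gcongr
    _ = r * (ε * exp (R ^ 2 / 2)) := by ring
    _ ≤ r * (1 / (2 * R ^ 3)) := by gcongr; exact h3.trans h4
    _ = _ := by ring

lemma Sol.small (h : Sol m Λ ε b g H) {R : ℝ} (hR : 16 ≤ R) (hεR : ε ≤ exp (-R ^ 2))
    {r : ℝ} (hr : r ∈ Ioo 0 b) (hrR : r ≤ R) :
    H r ≤ 1 / R ^ 2 ∧ √(1 + H r ^ 2) ≤ 2 ∧ H r ≤ 2 * SS H r := by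
  have h1 := h.S_small hR hεR hr hrR
  have h2 : r / (2 * R ^ 3) ≤ R / (2 * R ^ 3) := by gcongr
  have h3 : R / (2 * R ^ 3) = 1 / R ^ 2 / 2 := by field_simp
  have h4 : 1 / R ^ 2 ≤ 1 := by
    rw [div_le_one (by positivity)]; nlinarith
  obtain ⟨h5, h6⟩ := H_le_of_S (h.pos r hr).2 (by linarith)
  exact ⟨by linarith, h6, h5⟩

lemma Sol.R_lt (h : Sol m Λ ε b g H) {R : ℝ} (hR : 16 ≤ R) (hεR : ε ≤ exp (-R ^ 2)) : R < b := by
  by_contra! hbR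
  obtain ⟨r, hr, hr'⟩ := ((h.top.eventually_gt_atTop 1).and (Ioo_mem_nhdsLT h.hb)).exists
  have h1 := (h.small hR hεR hr' (hr'.2.le.trans hbR)).1
  have h4 : 1 / R ^ 2 ≤ 1 := by
    rw [div_le_one (by positivity)]; nlinarith
  linarith

lemma Sol.LS (h : Sol m Λ ε b g H) {R : ℝ} (hR : 16 ≤ R) (hεR : ε ≤ exp (-R ^ 2))
    (hRΛ : 4 * Λ ≤ R) {r : ℝ} (hr : r ∈ Ioo 0 b) : Λ * SS H r ≤ r / 4 := by
  have hΛ := h.hΛ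
  have hr0 := hr.1
  rcases le_total r R with hrR | hrR
  · have h1 := h.S_small hR hεR hr hrR
    have h3 : (16 : ℝ) ^ 2 ≤ R ^ 2 := by gcongr
    calc Λ * SS H r ≤ (R / 4) * (r / (2 * R ^ 3)) := by
          have := (S_pos_iff (H := H) r).2 (h.pos r hr).2
          gcongr; linarith
      _ = r / 4 * (1 / (2 * R ^ 2)) := by field_simp
      _ ≤ r / 4 * 1 := by
          gcongr
          rw [div_le_one (by positivity)]; linarith
      _ = r / 4 := by ring
  · have h1 := (abs_le.1 (S_abs_le (H := H) r)).2
    nlinarith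

lemma Sol.Q_ge (h : Sol m Λ ε b g H) {R : ℝ} (hR : 16 ≤ R) (hεR : ε ≤ exp (-R ^ 2))
    (hRΛ : 4 * Λ ≤ R) {c : ℝ} (hc : c ∈ Ioo 0 b) : ε ≤ QQ Λ g H c :=
  mono_lim hc.1 (fun r hr => h.dQ r ⟨hr.1, hr.2.trans_lt hc.2⟩) (fun r hr => by
    have hr' : r ∈ Ioo 0 b := ⟨hr.1, hr.2.trans_lt hc.2⟩
    have h1 := h.LS hR hεR hRΛ hr'
    have h2 := (h.pos r hr').1
    have h3 := hr.1
    have : 0 ≤ r - Λ * SS H r := by linarith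
    positivity) h.lQ

lemma Sol.H_ge (h : Sol m Λ ε b g H) {R : ℝ} (hR : 16 ≤ R) (hεR : ε ≤ exp (-R ^ 2))
    (hRΛ : 4 * Λ ≤ R) {c : ℝ} (hc : c ∈ Ioc 0 R) : ε / (2 * (m + 1)) * c ≤ H c := by
  have hRb := h.R_lt hR hεR
  have hε := h.hε
  have h1 := h.S_lower (K := ε / (2 * (m + 1))) hc.1 (hc.2.trans_lt hRb) (fun r hr => by
    have hr' : r ∈ Ioo 0 b := ⟨hr.1, (hr.2.trans hc.2).trans_lt hRb⟩
    have hQ := h.Q_ge hR hεR hRΛ hr'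
    have hw := (h.small hR hεR hr' (hr.2.trans hc.2)).2.1
    have e : ε / (2 * (m + 1)) * ((m : ℝ) + 1) = ε / 2 := by field_simp
    rw [e]
    have hw0 := w_pos (H r)
    have hQ0 : 0 ≤ QQ Λ g H r := hε.le.trans hQ
    gcongr)
  refine h1.trans ?_
  exact div_le_self (h.pos c ⟨hc.1, hc.2.trans_lt hRb⟩).2.le (w_ge _)

lemma Sol.PkH (h : Sol m Λ ε b g H) {R : ℝ} (hR : 16 ≤ R) (hεR : ε ≤ exp (-R ^ 2))
    (hRΛ : 4 * Λ ≤ R) {k s c : ℝ} (hs : 2 * ((m : ℝ) + 1) ≤ s) (hk : 2 * k ≤ s)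
    (hsc : s ≤ c) (hc : c < b) :
    k * (H c - H s) ≤ PP m Λ g H c := by
  have hs0 : 0 < s := lt_of_lt_of_le (by positivity) hs
  have := mono_Icc (F := fun r => PP m Λ g H r - k * H r) hsc
    (fun r hr => (h.dP r ⟨hs0.trans_le hr.1, hr.2.trans_lt hc⟩).sub
      ((h.dH' r ⟨hs0.trans_le hr.1, hr.2.trans_lt hc⟩).const_mul k))
    (fun r hr => by
      have hr0 : 0 < r := hs0.trans_le hr.1
      have hr' : r ∈ Ioo 0 b := ⟨hr0, hr.2.trans_lt hc⟩
      obtain ⟨hP, hH⟩ := h.pos r hr'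
      have hL := h.LS hR hεR hRΛ hr'
      have hmr : m / r ≤ r / 4 := by
        rw [div_le_iff₀ hr0]
        have : 2 * ((m : ℝ) + 1) ≤ r := hs.trans hr.1
        have hm : (0 : ℝ) ≤ m := by positivity
        nlinarith
      have h1 : 0 ≤ m * H r / r ^ 2 := by positivity
      have h2 : 0 ≤ PP m Λ g H r * (1 + H r ^ 2) * (r - Λ * SS H r - m / r - k) := by
        have : 0 ≤ r - Λ * SS H r - m / r - k := by linarith [hr.1]
        positivity
      linarith)
  have h2 := (h.pos s ⟨hs0, hsc.trans_lt hc⟩).1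
  linarith

theorem Sol.main (h : Sol m Λ ε b g H) {R x : ℝ} (hR : 16 ≤ R) (hεR : ε ≤ exp (-R ^ 2))
    (hRΛ : 4 * Λ ≤ R) (hRn : 64 * ((m : ℝ) + 1) ^ 2 * exp (2 * ((m : ℝ) + 1) ^ 2) ≤ R)
    (lx : Tendsto g (𝓝[<] b) (𝓝 x)) : R ≤ b ∧ -64 / R ≤ x ∧ x < 0 := by
  have hRb := h.R_lt hR hεR
  have hε := h.hε
  have hR0 : 0 < R := by linarith
  have hmm : (2 : ℝ) ≤ m + 1 := by
    have : (1 : ℝ) ≤ m := by exact_mod_cast h.hm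
    linarith
  set N : ℝ := (m : ℝ) + 1 with hN
  have hexp1 : 1 ≤ exp (2 * N ^ 2) := Real.one_le_exp (by positivity)
  have hRN : 64 * N ^ 2 ≤ R := by
    refine le_trans ?_ hRn
    exact le_mul_of_one_le_right (by positivity) hexp1
  have hRN' : 8 * N ≤ R := by nlinarith
  refine ⟨hRb.le, ?_, ?_⟩
  · -- lower bound
    have hr1 : 2 * N ∈ Ioo 0 b := ⟨by positivity, by linarith⟩
    have hH1 : H (2 * N) ≤ ε * (4 * N) * exp (2 * N ^ 2) := by
      have h1 := (h.small hR hεR hr1 (by linarith)).2.2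
      have h2 := h.S_le _ hr1
      have e : (2 * N) ^ 2 / 2 = 2 * N ^ 2 := by ring
      rw [e] at h2
      linarith
    have hH4 := h.H_ge hR hεR hRΛ (c := R / 4) ⟨by positivity, by linarith⟩
    rw [← hN] at hH4
    have h21 : 2 * H (2 * N) ≤ H (R / 4) := by
      refine le_trans ?_ hH4
      have e : ε / (2 * N) * (R / 4) = ε / (8 * N) * R := by field_simp; norm_num
      rw [e]
      calc 2 * H (2 * N) ≤ 2 * (ε * (4 * N) * exp (2 * N ^ 2)) := by linarith
        _ = ε / (8 * N) * (64 * N ^ 2 * exp (2 * N ^ 2)) := by field_simp; norm_num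
        _ ≤ _ := by gcongr
    have hR4p : 0 < H (R / 4) := (h.pos _ ⟨by positivity, by linarith⟩).2
    have hRR : 2 * H (R / 4) ≤ H R := by
      have := mono_Icc (F := fun r => H r - H (R / 4) / 2 * r) (a := R / 4) (c := R) (by linarith)
        (fun r hr => (h.dH' r ⟨by linarith [hr.1], hr.2.trans_lt hRb⟩).sub
          ((hasDerivAt_id r).const_mul (H (R / 4) / 2)))
        (fun r hr => by
          have hr' : r ∈ Ioo 0 b := ⟨by linarith [hr.1], hr.2.trans_lt hRb⟩
          have h1 := h.PkH hR hεR hRΛ (k := 1) (s := 2 * N) (c := r) le_rfl (by linarith)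
            (by linarith [hr.1]) hr'.2
          have h2 := h.H_mono (x := R / 4) (y := r) (by positivity) hr.1 hr'.2
          have hP := (h.pos r hr').1
          have : 0 ≤ H r ^ 2 * PP m Λ g H r := by positivity
          linarith)
      nlinarith
    have hgR : -(1 / R) ≤ g R := by
      have := mono_lim (F := fun r => g r + 1 / R ^ 2 * r) hR0
        (fun r hr => (h.dg r ⟨hr.1, hr.2.trans_lt hRb⟩).add
          ((hasDerivAt_id r).const_mul (1 / R ^ 2)))
        (fun r hr => by
          have := (h.small hR hεR ⟨hr.1, hr.2.trans_lt hRb⟩ hr.2).1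
          linarith)
        (h.lg.add (Sol.limId.const_mul (1 / R ^ 2)))
      have e : 1 / R ^ 2 * R = 1 / R := by field_simp
      rw [e] at this
      linarith
    apply ge_of_tendsto lx
    filter_upwards [Ioo_mem_nhdsLT hRb] with c hc
    have := mono_Icc (F := fun r => g r + 16 / R * arctan (H r)) hc.1.le
      (fun r hr => (h.dg r ⟨hR0.trans_le hr.1, hr.2.trans_lt hc.2⟩).add
        (((h.dH' r ⟨hR0.trans_le hr.1, hr.2.trans_lt hc.2⟩).arctan).const_mul (16 / R)))
      (fun r hr => by
        have hr' : r ∈ Ioo 0 b := ⟨hR0.trans_le hr.1, hr.2.trans_lt hc.2⟩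
        have h1 := h.PkH hR hεR hRΛ (k := R / 8) (s := R / 4) (c := r) (by linarith) (by linarith)
            (by linarith [hr.1]) hr'.2
        have h2 := h.H_mono (x := R) (y := r) hR0 hr.1 hr'.2
        have e : 16 / R * (1 / (1 + H r ^ 2) * ((1 + H r ^ 2) * PP m Λ g H r))
          = 16 / R * PP m Λ g H r := by field_simp
        rw [e]
        have h3 : 16 / R * (R / 8 * (H r - H (R / 4))) ≤ 16 / R * PP m Λ g H r := by gcongr
        have h4 : 16 / R * (R / 8 * (H r - H (R / 4))) = 2 * (H r - H (R / 4)) := by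
          field_simp; ring
        linarith)
    have h5 : arctan (H c) ≤ 2 := by
      have := Real.arctan_lt_pi_div_two (H c); linarith [Real.pi_le_four]
    have h6 : 0 ≤ arctan (H R) := Real.arctan_nonneg.2 (h.pos R ⟨hR0, hRb⟩).2.le
    have h7 : 16 / R * arctan (H c) ≤ 16 / R * 2 := by gcongr
    have h8 : 0 ≤ 16 / R * arctan (H R) := by positivity
    have e1 : -64 / R = -(64 * (1 / R)) := by ring
    have e2 : 16 / R * 2 = 32 * (1 / R) := by ring
    have h9 : 0 < 1 / R := by positivity
    linarith
  · -- negativity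
    have hR2b : R / 2 < b := by linarith
    have hneg : g (R / 2) < 0 := by
      have := mono_lim (F := fun r => -g r - ε / (4 * N) * r ^ 2) (c := R / 2) (by positivity)
        (fun r hr => ((h.dg r ⟨hr.1, hr.2.trans_lt hR2b⟩).neg).sub
          ((hasDerivAt_pow 2 r).const_mul (ε / (4 * N))))
        (fun r hr => by
          have := h.H_ge hR hεR hRΛ (c := r) ⟨hr.1, by linarith [hr.2]⟩
          rw [← hN] at this
          have e : ε / (4 * N) * (((2 : ℕ) : ℝ) * r ^ (2 - 1)) = ε / (2 * N) * r := by
            simp; field_simp; norm_num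
          rw [e]; linarith)
        (h.lg.neg.sub ((Sol.limId.pow 2).const_mul (ε / (4 * N))))
      have h2 : ε < ε / (4 * N) * (R / 2) ^ 2 := by
        have e : ε / (4 * N) * (R / 2) ^ 2 = ε * (R ^ 2 / (16 * N)) := by field_simp; norm_num
        rw [e]
        apply lt_mul_of_one_lt_right hε
        rw [one_lt_div (by positivity)]
        nlinarith
      norm_num at this
      linarith
    refine lt_of_le_of_lt ?_ hneg
    apply le_of_tendsto lx
    filter_upwards [Ioo_mem_nhdsLT hR2b] with c hc
    exact h.g_anti (by positivity) hc.1.le hc.2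

end
end NearPlane

/-- Proposition 3.1: behavior near the hyperplane solution. For
`-min{(23n+4)/(28√n), (25n-6)/(30√n)} ≤λ < 0` there is `ε̄ > 0` such that for all
`ε ∈ (0, ε̄]`, the solution with `f(0) = -λ + ε`, `f'(0) = 0`, blowing up at `r_*`
with limit value `x_*`, satisfies `r_* ≥ √(log(1/(√π ε)))` and
`-(30n+4)/√(log(1/(√π ε))) - λ ≤ x_* < -λ`. -/
theorem behavior_near_plane
    (n : ℕ) (hn : 2 ≤ n) (lam : ℝ)
    (hlam₁ : -min ((23 * (n : ℝ) + 4) / (28 * Real.sqrt n))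
        ((25 * (n : ℝ) - 6) / (30 * Real.sqrt n)) ≤ lam)
    (hlam₂ : lam < 0) :
    ∃ εbar > (0 : ℝ), ∀ ε : ℝ, 0 < ε → ε ≤ εbar →
      ∀ (f : ℝ → ℝ) (rstar xstar : ℝ), 0 < rstar →
        ContDiffOn ℝ 1 f (Ico 0 rstar) →
        ContDiffOn ℝ 2 f (Ioo 0 rstar) →
        (∀ r ∈ Ioo (0 : ℝ) rstar, ProfileEq n lam f r) →
        f 0 = -lam + ε → deriv f 0 = 0 →
        Tendsto (deriv f) (nhdsWithin rstar (Iio rstar)) atBot →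
        Tendsto f (nhdsWithin rstar (Iio rstar)) (nhds xstar) →
        rstar ≥ Real.sqrt (Real.log (1 / (Real.sqrt Real.pi * ε))) ∧
        -(30 * (n : ℝ) + 4) / Real.sqrt (Real.log (1 / (Real.sqrt Real.pi * ε))) - lam ≤ xstar ∧
        xstar < -lam := by
  obtain ⟨m, rfl⟩ : ∃ m, n = m + 1 := ⟨n - 1, by omega⟩
  have hm : 1 ≤ m := by omega
  have hmR : (1 : ℝ) ≤ m := by exact_mod_cast hm
  set R0 : ℝ := 16 + 4 * (-lam) + 64 * ((m : ℝ) + 1) ^ 2 * exp (2 * ((m : ℝ) + 1) ^ 2) with hR0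
  have hq : 0 ≤ 64 * ((m : ℝ) + 1) ^ 2 * exp (2 * ((m : ℝ) + 1) ^ 2) := by positivity
  have hπ : 1 ≤ √π := by
    rw [Real.one_le_sqrt]; linarith [Real.pi_gt_three]
  have hR00 : 0 ≤ R0 := by linarith
  refine ⟨exp (-R0 ^ 2) / √π, by positivity, ?_⟩
  intro ε hε hεb f b x hb hf1 hf2 hode hf0 _ htop hx
  have hpe : 0 < √π * ε := by positivity
  rw [le_div_iff₀ (by positivity)] at hεb
  set R := √(log (1 / (√π * ε))) with hR
  have hlog : R0 ^ 2 ≤ log (1 / (√π * ε)) := by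
    rw [one_div, Real.log_inv]
    have : log (√π * ε) ≤ -R0 ^ 2 := by
      rw [Real.log_le_iff_le_exp hpe]; linarith
    linarith
  have hRR0 : R0 ≤ R := Real.le_sqrt_of_sq_le hlog
  have hRsq : R ^ 2 = log (1 / (√π * ε)) := Real.sq_sqrt ((sq_nonneg _).trans hlog)
  have hεR : ε ≤ exp (-R ^ 2) := by
    rw [hRsq, one_div, Real.log_inv, neg_neg, Real.exp_log hpe]
    exact le_mul_of_one_le_left hε.le hπ
  have hd1 : ∀ r ∈ Ioo 0 b, HasDerivAt f (deriv f r) r := fun r hr =>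
    ((hf2.differentiableOn (by norm_num)).differentiableAt (isOpen_Ioo.mem_nhds hr)).hasDerivAt
  have hd2 : ∀ r ∈ Ioo 0 b, HasDerivAt (deriv f) (deriv (deriv f) r) r := fun r hr => by
    have h1 : ContDiffOn ℝ 1 (deriv f) (Ioo 0 b) :=
      hf2.deriv_of_isOpen isOpen_Ioo (by norm_num)
    exact ((h1.differentiableOn (by norm_num)).differentiableAt (isOpen_Ioo.mem_nhds hr)).hasDerivAt
  have hIoo : Ioo 0 b ∈ 𝓝[>] (0 : ℝ) := Ioo_mem_nhdsGT hb
  have hle : 𝓝[>] (0 : ℝ) ≤ 𝓝[Ico 0 b] 0 := by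
    apply nhdsWithin_le_of_mem
    exact mem_of_superset hIoo Ioo_subset_Ico_self
  have hlf : Tendsto f (𝓝[>] 0) (𝓝 (-lam + ε)) := by
    rw [← hf0]
    exact (hf1.continuousOn 0 ⟨le_rfl, hb⟩).tendsto.mono_left hle
  have hlH : Tendsto (deriv f) (𝓝[>] 0) (𝓝 (derivWithin f (Ico 0 b) 0)) := by
    have h1 := ((hf1.continuousOn_derivWithin (uniqueDiffOn_Ico 0 b) le_rfl) 0
      ⟨le_rfl, hb⟩).tendsto.mono_left hle
    refine h1.congr' ?_
    filter_upwards [hIoo] with r hr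
    exact derivWithin_of_mem_nhds (Ico_mem_nhds hr.1 hr.2)
  have hsol : NearPlane.Sol m (-lam) ε b (fun r => f r + lam) (fun r => -deriv f r) := by
    refine ⟨hm, by linarith, hε, hb, ?_, ?_, ?_, ⟨_, hlH.neg⟩, ?_⟩
    · intro r hr
      simpa using (hd1 r hr).add_const lam
    · intro r hr
      refine (hd2 r hr).neg.congr_deriv ?_
      have h1 := hode r hr
      unfold ProfileEq at h1
      rw [div_eq_iff (by positivity)] at h1
      rw [h1]
      push_cast
      rw [neg_sq]
      ring
    · have := hlf.add_const lam
      simpa using this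
    · exact tendsto_neg_atBot_atTop.comp htop
  have hRpos : 0 < R := by linarith
  obtain ⟨h1, h2, h3⟩ := hsol.main (R := R) (x := x + lam) (by linarith) hεR (by linarith)
    (by linarith) (hx.add_const lam)
  refine ⟨h1, ?_, by linarith⟩
  have h4 : -(30 * (((m + 1 : ℕ) : ℝ)) + 4) / R ≤ -64 / R := by
    apply div_le_div_of_nonneg_right _ hRpos.le
    push_cast; linarith
  linarith
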